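/- arXiv:1104.4416 — 2 statements merged into one kernel-verified Lean document; each statement's English description precedes it below -/
import Mathlib

section
/- Suppose q = 2 and that 𝒯 contains no triple of the form (x,x,x). Then ε = 0 in A_𝒯. -/
/-- A triangle presentation compatible with the bijection `lam : P ≃ L`:
a set of triples satisfying conditions (i), (ii), (iii). -/
structure IsTrianglePresentation {P L : Type*} [Membership P L]
    (lam : P ≃ L) (T : Set (P × P × P)) : Prop where
  exists_iff : ∀ x y : P, (∃ z : P, (x, y, z) ∈ T) ↔ y ∈ lam x
  cyclic : ∀ x y z : P, (x, y, z) ∈ T → (y, z, x) ∈ T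
  unique : ∀ x y z z' : P, (x, y, z) ∈ T → (x, y, z') ∈ T → z = z'

open Classical in
/-- Relators of `A_𝒯`: generators are the points of `P` plus one extra generator
`ε` (encoded as `none : Option P`). -/
def triangleRels {P L : Type*} [Fintype P] [Membership P L]
    (lam : P ≃ L) (T : Set (P × P × P)) : Set (FreeAbelianGroup (Option P)) :=
  (Set.range fun x : P =>
      (∑ y ∈ Finset.univ.filter fun y : P => ¬ y ∈ lam x, FreeAbelianGroup.of (some y))
        - FreeAbelianGroup.of (some x)) ∪
  ((fun t : P × P × P =>
      FreeAbelianGroup.of (some t.1) + FreeAbelianGroup.of (some t.2.1)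
        + FreeAbelianGroup.of (some t.2.2) - FreeAbelianGroup.of (none : Option P)) '' T) ∪
  {(∑ x : P, FreeAbelianGroup.of (some x)) - FreeAbelianGroup.of (none : Option P)}

/-- The abelian group `A_𝒯`, presented by generators `P ∪ {ε}` and the relations above. -/
abbrev TriangleGroup {P L : Type*} [Fintype P] [Membership P L]
    (lam : P ≃ L) (T : Set (P × P × P)) : Type _ :=
  FreeAbelianGroup (Option P) ⧸ AddSubgroup.closure (triangleRels lam T)

/-- The image in `A_𝒯` of the generator corresponding to a point `x ∈ P`. -/
def triangleGen {P L : Type*} [Fintype P] [Membership P L]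
    (lam : P ≃ L) (T : Set (P × P × P)) (x : P) : TriangleGroup lam T :=
  QuotientAddGroup.mk (FreeAbelianGroup.of (some x))

/-- The image in `A_𝒯` of the generator `ε`. -/
def triangleEps {P L : Type*} [Fintype P] [Membership P L]
    (lam : P ≃ L) (T : Set (P × P × P)) : TriangleGroup lam T :=
  QuotientAddGroup.mk (FreeAbelianGroup.of (none : Option P))

theorem exists_reps {α : Type*} [Fintype α] (c : Equiv.Perm α) (hc : ∀ t, c (c (c t)) = t)
    (F : Finset α) (hF : ∀ t, c t ∈ F ↔ t ∈ F) (hfix : ∀ t ∈ F, c t ≠ t) :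
    ∃ R : Finset α, R ⊆ F ∧ ∀ {G : Type _} [AddCommGroup G] (g : α → G),
      ∑ t ∈ F, g t = ∑ t ∈ R, (g t + g (c t) + g (c (c t))) := by
  classical
  let f := Fintype.equivFin α
  let p : α → Prop := fun t => f t < f (c t) ∧ f t < f (c (c t))
  refine ⟨F.filter p, Finset.filter_subset _ _, ?_⟩
  intro G _ g
  have h1 : ∀ h : α → G, ∑ t ∈ F, h (c t) = ∑ t ∈ F, h t := fun h =>
    Finset.sum_equiv c (fun t => (hF t).symm) (fun _ _ => rfl)
  have key : ∀ t ∈ F, g t = (if p t then g t else 0) + (if p (c t) then g t else 0)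
      + (if p (c (c t)) then g t else 0) := by
    intro t ht
    have a1 : f t ≠ f (c t) := fun h => hfix t ht (f.injective h).symm
    have a2 : f (c t) ≠ f (c (c t)) := fun h => hfix (c t) ((hF t).2 ht) (f.injective h).symm
    have a3 : f (c (c t)) ≠ f t := fun h => by
      have h2 := f.injective h
      have h3 := congrArg c h2
      rw [hc] at h3
      exact hfix t ht h3.symm
    simp only [p, hc]
    rcases lt_or_gt_of_ne a1 with b1 | b1 <;> rcases lt_or_gt_of_ne a2 with b2 | b2 <;>
      rcases lt_or_gt_of_ne a3 with b3 | b3 <;>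
      simp [b1, b2, b3, not_lt_of_gt b1, not_lt_of_gt b2, not_lt_of_gt b3]
    · exact absurd (b1.trans b2) (not_lt_of_gt b3)
    · exact absurd (b2.trans b1) (not_lt_of_gt b3)
  rw [Finset.sum_congr rfl key, Finset.sum_filter, Finset.sum_add_distrib, Finset.sum_add_distrib]
  have e2 : ∑ t ∈ F, (if p (c t) then g t else 0) = ∑ t ∈ F, if p t then g (c (c t)) else 0 := by
    rw [← h1 (fun t => if p t then g (c (c t)) else 0)]
    simp only [hc]
  have e3 : ∑ t ∈ F, (if p (c (c t)) then g t else 0) = ∑ t ∈ F, if p t then g (c t) else 0 := by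
    rw [← h1 (fun t => if p t then g (c t) else 0),
      ← h1 (fun t => if p (c t) then g (c (c t)) else 0)]
    simp only [hc]
  rw [e2, e3, ← Finset.sum_add_distrib, ← Finset.sum_add_distrib]
  refine Finset.sum_congr rfl fun t _ => ?_
  split_ifs
  · abel
  · simp

/-- Cyclic rotation of triples. -/
def rotTriple (P : Type*) : Equiv.Perm (P × P × P) where
  toFun t := (t.2.1, t.2.2, t.1)
  invFun t := (t.2.2, t.1, t.2.1)
  left_inv _ := rfl
  right_inv _ := rfl

open Classical in
theorem triangle_aux {P L : Type*} [Fintype P] [Fintype L] [Membership P L]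
    [Configuration.ProjectivePlane P L]
    (horder : Configuration.ProjectivePlane.order P L = 2)
    (lam : P ≃ L) (T : Set (P × P × P)) (hT : IsTrianglePresentation lam T)
    (hnd : ∀ x : P, (x, x, x) ∉ T) {G : Type _} [AddCommGroup G] (u : P → G) (e : G)
    (r1 : ∀ x, ∑ y ∈ Finset.univ.filter (fun y : P => ¬ y ∈ lam x), u y = u x)
    (r2 : ∀ x y z, (x, y, z) ∈ T → u x + u y + u z = e)
    (r3 : ∑ x, u x = e) : e = 0 := by
  have hP : Fintype.card P = 7 := by
    rw [Configuration.ProjectivePlane.card_points P L, horder]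
    norm_num
  have hpts : ∀ x, (Finset.univ.filter (fun y : P => y ∈ lam x)).card = 3 := by
    intro x
    have h := Configuration.ProjectivePlane.pointCount_eq P (lam x)
    rw [horder, Configuration.pointCount, Nat.card_eq_fintype_card, Fintype.card_subtype] at h
    exact h
  have hlines : ∀ y, (Finset.univ.filter (fun x : P => y ∈ lam x)).card = 3 := by
    intro y
    have h := Configuration.ProjectivePlane.lineCount_eq L y
    rw [horder, Configuration.lineCount, Nat.card_eq_fintype_card] at h
    rw [← Fintype.card_subtype]
    exact (Fintype.card_congr (lam.subtypeEquiv fun _ => Iff.rfl)).trans h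
  have hlines' : ∀ y, (Finset.univ.filter (fun x : P => ¬ y ∈ lam x)).card = 4 := by
    intro y
    have h := Finset.card_filter_add_card_filter_not (s := (Finset.univ : Finset P))
      (fun x : P => y ∈ lam x)
    rw [hlines, Finset.card_univ, hP] at h
    omega
  have E1 : (4 : ℕ) • e = e := by
    conv_rhs => rw [← r3, ← Finset.sum_congr rfl fun x _ => r1 x]
    simp only [Finset.sum_filter]
    rw [Finset.sum_comm]
    simp only [← Finset.sum_filter, Finset.sum_const, hlines', ← Finset.smul_sum, r3]
  let F : Finset (P × P × P) := Finset.univ.filter (· ∈ T)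
  have hfib : ∀ x, (F.filter (fun t => t.1 = x)).card = 3 := by
    intro x
    rw [← hpts x]
    refine Finset.card_bij (fun t _ => t.2.1) ?_ ?_ ?_
    · rintro ⟨a, b, d⟩ h
      simp only [F, Finset.mem_filter, Finset.mem_univ, true_and] at h ⊢
      obtain ⟨h, rfl⟩ := h
      exact (hT.exists_iff _ _).1 ⟨_, h⟩
    · rintro ⟨a, b, d⟩ h ⟨a', b', d'⟩ h' hb
      simp only [F, Finset.mem_filter, Finset.mem_univ, true_and] at h h' hb
      obtain ⟨h, rfl⟩ := h
      obtain ⟨h', rfl⟩ := h'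
      subst hb
      rw [hT.unique _ _ _ _ h h']
    · intro b hb
      simp only [Finset.mem_filter, Finset.mem_univ, true_and] at hb
      obtain ⟨z, hz⟩ := (hT.exists_iff _ _).2 hb
      exact ⟨(x, b, z), by simp [F, hz], rfl⟩
  have hsum : ∀ {H : Type _} [AddCommGroup H] (v : P → H),
      ∑ t ∈ F, v t.1 = (3 : ℕ) • ∑ x, v x := by
    intro H _ v
    rw [← Finset.sum_fiberwise F (fun t => t.1), Finset.smul_sum]
    refine Finset.sum_congr rfl fun x _ => ?_
    rw [← hfib x, ← Finset.sum_const]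
    exact Finset.sum_congr rfl fun t ht => by rw [(Finset.mem_filter.1 ht).2]
  have hrot : ∀ t, rotTriple P t ∈ F ↔ t ∈ F := by
    rintro ⟨a, b, d⟩
    simp only [F, Finset.mem_filter, Finset.mem_univ, true_and, rotTriple, Equiv.coe_fn_mk]
    exact ⟨fun h => hT.cyclic _ _ _ (hT.cyclic _ _ _ h), hT.cyclic _ _ _⟩
  obtain ⟨R, hR, hRs⟩ := exists_reps (rotTriple P) (fun _ => rfl) F hrot (by
    rintro ⟨a, b, d⟩ h h'
    simp only [F, Finset.mem_filter, Finset.mem_univ, true_and] at h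
    simp only [rotTriple, Equiv.coe_fn_mk, Prod.mk.injEq] at h'
    obtain ⟨rfl, rfl, -⟩ := h'
    exact hnd _ h)
  have hFc : F.card = 21 := by
    rw [Finset.card_eq_sum_card_fiberwise (f := fun t => t.1) (t := Finset.univ)
      (fun _ _ => by simp)]
    simp [hfib, hP]
  have hRc : R.card = 7 := by
    have h := hRs (fun _ => (ULift.up 1 : ULift ℤ))
    have h' := congrArg ULift.down h
    simp [hFc] at h'
    omega
  have E2 : (3 : ℕ) • e = (7 : ℕ) • e := by
    rw [← hRc, ← Finset.sum_const]
    conv_lhs => rw [← r3, ← hsum u, hRs]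
    refine Finset.sum_congr rfl fun t ht => ?_
    have := hR ht
    simp only [F, Finset.mem_filter, Finset.mem_univ, true_and] at this
    exact r2 _ _ _ this
  have E3 : (3 : ℕ) • e = 0 := by
    have : (3 : ℕ) • e + e = 0 + e := by rw [← succ_nsmul, E1, zero_add]
    exact add_right_cancel this
  have : e = (7 : ℕ) • e - (2 : ℕ) • (3 : ℕ) • e := by
    rw [← mul_nsmul]; abel
  rw [this, ← E2, E3]; simp

open Classical in
theorem stmt9 {P L : Type*} [Fintype P] [Fintype L] [Membership P L]
    [Configuration.ProjectivePlane P L] (q : ℕ) (hq : 2 ≤ q)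
    (horder : Configuration.ProjectivePlane.order P L = q)
    (lam : P ≃ L) (T : Set (P × P × P)) (hT : IsTrianglePresentation lam T)
    (hq2 : q = 2) (hnd : ∀ x : P, (x, x, x) ∉ T) :
    triangleEps lam T = 0 := by
  subst hq2
  refine triangle_aux horder lam T hT hnd (triangleGen lam T) (triangleEps lam T) ?_ ?_ ?_
  · intro x
    have h : _ ∈ AddSubgroup.closure (triangleRels lam T) :=
      AddSubgroup.subset_closure (Or.inl (Or.inl ⟨x, rfl⟩))
    have h2 := (QuotientAddGroup.eq_zero_iff _).2 h
    rw [QuotientAddGroup.mk_sub, sub_eq_zero, QuotientAddGroup.mk_sum] at h2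
    exact h2
  · intro x y z hxyz
    have h : _ ∈ AddSubgroup.closure (triangleRels lam T) :=
      AddSubgroup.subset_closure (Or.inl (Or.inr ⟨(x, y, z), hxyz, rfl⟩))
    have h2 := (QuotientAddGroup.eq_zero_iff _).2 h
    rw [QuotientAddGroup.mk_sub, sub_eq_zero] at h2
    exact h2
  · have h : _ ∈ AddSubgroup.closure (triangleRels lam T) :=
      AddSubgroup.subset_closure (Or.inr rfl)
    have h2 := (QuotientAddGroup.eq_zero_iff _).2 h
    rw [QuotientAddGroup.mk_sub, sub_eq_zero, QuotientAddGroup.mk_sum] at h2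
    exact h2
end

section
/- Let q = 4, let K be a finite field with 4 elements and L a field extension of K of degree 3 (so L has 64 elements). Then ε = 0 in the abelian group A_{𝒯₀}. -/
/-- The image of `Kˣ` in `Fˣ`, as a subgroup of `Fˣ`. -/
def baseUnits (K F : Type*) [Field K] [Field F] [Algebra K F] : Subgroup Fˣ :=
  (Units.map (algebraMap K F).toMonoidHom).range

/-- The quotient group `P = Fˣ/Kˣ`. -/
abbrev ProjPts (K F : Type*) [Field K] [Field F] [Algebra K F] : Type _ :=
  Fˣ ⧸ baseUnits K F

/-- The class in `P = Fˣ/Kˣ` of a unit `x ∈ Fˣ`. -/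
def pbar {K F : Type*} [Field K] [Field F] [Algebra K F] (x : Fˣ) : ProjPts K F :=
  QuotientGroup.mk x

/-- The triangle presentation of Tits type:
`𝒯₀ = {(x̄, x̄·ξ̄, x̄·ξ̄^(q+1)) : x, ξ ∈ Fˣ, Tr(ξ) = 0}`. -/
def titsT0 (q : ℕ) (K F : Type*) [Field K] [Field F] [Algebra K F] :
    Set (ProjPts K F × ProjPts K F × ProjPts K F) :=
  {t | ∃ x ξ : Fˣ, Algebra.trace K F (ξ : F) = 0 ∧
        t = (pbar x, pbar x * pbar ξ, pbar x * pbar ξ ^ (q + 1))}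

/-- Incidence for the point-line correspondence `λ₀`: the class `b` lies on the line
`λ₀(a)`, i.e. `Tr(y/x) = 0` for representatives `x, y`. -/
def titsInc {K F : Type*} [Field K] [Field F] [Algebra K F] (a b : ProjPts K F) : Prop :=
  ∃ x y : Fˣ, pbar x = a ∧ pbar y = b ∧ Algebra.trace K F ((y / x : Fˣ) : F) = 0

open Classical in
/-- The relators of the abelian group `A_𝒯₀`: generators are the elements of
`P = Fˣ/Kˣ` plus one extra generator `ε` (encoded as `none`). -/
noncomputable def titsRels (q : ℕ) (K F : Type*) [Field K] [Field F] [Algebra K F]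
    [Fintype F] : Set (FreeAbelianGroup (Option (ProjPts K F))) :=
  letI : Fintype (ProjPts K F) := Fintype.ofFinite _
  (Set.range fun a : ProjPts K F =>
      (∑ b ∈ Finset.univ.filter fun b : ProjPts K F => ¬ titsInc a b,
          FreeAbelianGroup.of (some b)) - FreeAbelianGroup.of (some a)) ∪
  ((fun t : ProjPts K F × ProjPts K F × ProjPts K F =>
      FreeAbelianGroup.of (some t.1) + FreeAbelianGroup.of (some t.2.1)
        + FreeAbelianGroup.of (some t.2.2)
        - FreeAbelianGroup.of (none : Option (ProjPts K F))) '' titsT0 q K F) ∪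
  {(∑ a : ProjPts K F, FreeAbelianGroup.of (some a))
      - FreeAbelianGroup.of (none : Option (ProjPts K F))}

/-- The abelian group `A_𝒯₀`. -/
abbrev TitsGroup (q : ℕ) (K F : Type*) [Field K] [Field F] [Algebra K F] [Fintype F] :
    Type _ :=
  FreeAbelianGroup (Option (ProjPts K F)) ⧸ AddSubgroup.closure (titsRels q K F)

/-- The image of the generator `ε` in `A_𝒯₀`. -/
noncomputable def titsEps (q : ℕ) (K F : Type*) [Field K] [Field F] [Algebra K F]
    [Fintype F] : TitsGroup q K F :=
  QuotientAddGroup.mk (FreeAbelianGroup.of (none : Option (ProjPts K F)))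

lemma aux_cube {K F : Type*} [Field K] [Field F] [Algebra K F] [Fintype K]
    (hK : Fintype.card K = 4) (h2 : (2 : F) = 0) (x y : Fˣ) (h : (x : F) ^ 3 = (y : F) ^ 3) :
    pbar (K := K) x = pbar y := by
  classical
  obtain ⟨z, hz⟩ : ∃ z : K, z ∉ ({0, 1} : Finset K) := by
    by_contra hc
    push Not at hc
    have h1 : (Finset.univ : Finset K) ⊆ {0, 1} := fun a _ => hc a
    have h3 := Finset.card_le_card h1
    rw [Finset.card_univ, hK] at h3
    have := Finset.card_le_two (a := (0 : K)) (b := 1)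
    omega
  simp only [Finset.mem_insert, Finset.mem_singleton, not_or] at hz
  obtain ⟨z0, z1⟩ := hz
  have hz4 : z ^ 4 = z := by rw [← hK]; exact FiniteField.pow_card z
  have hzz : z ^ 2 + z + 1 = 0 := by
    have : z * (z - 1) * (z ^ 2 + z + 1) = 0 := by linear_combination hz4
    rcases mul_eq_zero.1 this with h | h
    · rcases mul_eq_zero.1 h with h | h
      · exact absurd h z0
      · exact absurd (sub_eq_zero.1 h) z1
    · exact h
  have hZ : (algebraMap K F z) ^ 2 + algebraMap K F z + 1 = 0 := by
    rw [← map_pow, ← map_add, ← map_one (algebraMap K F), ← map_add, hzz, map_zero]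
  set Z := algebraMap K F z with hZdef
  have hfac : ((y : F) - x) * ((y : F) - Z * x) * ((y : F) - Z ^ 2 * x) = 0 := by
    linear_combination -h + (x * (x * y) * Z - x * y * y - x ^ 3 * (Z - 1)) * hZ
  have key : ∀ k : K, k ≠ 0 → (y : F) = algebraMap K F k * x → pbar (K := K) x = pbar y := by
    intro k hk hy
    apply QuotientGroup.eq.2
    refine ⟨Units.mk0 k hk, ?_⟩
    ext
    have : (x : F) ≠ 0 := x.ne_zero
    simp [hy]
    field_simp
  rcases mul_eq_zero.1 hfac with h | h
  · rcases mul_eq_zero.1 h with h | h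
    · exact key 1 one_ne_zero (by simpa using sub_eq_zero.1 h)
    · exact key z z0 (sub_eq_zero.1 h)
  · exact key (z ^ 2) (pow_ne_zero _ z0) (by rw [map_pow]; exact sub_eq_zero.1 h)

lemma aux_cube' {K F : Type*} [Field K] [Field F] [Algebra K F] [Fintype K]
    (hK : Fintype.card K = 4) (x y : Fˣ) (h : pbar (K := K) x = pbar y) :
    x ^ 3 = y ^ 3 := by
  obtain ⟨k, hk⟩ := QuotientGroup.eq.1 h
  have hk3 : k ^ 3 = 1 := by
    have := FiniteField.pow_card_sub_one_eq_one (k : K) k.ne_zero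
    rw [hK] at this
    ext
    simpa using this
  have h1 : (x⁻¹ * y) ^ 3 = 1 := by rw [← hk, ← map_pow, hk3, map_one]
  rw [mul_pow, inv_pow, inv_mul_eq_one] at h1
  exact h1

lemma aux_final {P A : Type*} [CommGroup P] [Fintype P] [AddCommGroup A] (f : P → A) (e : A)
    (V W : P) (hW : W ^ 7 = 1)
    (hsum : ∑ b, f b = e)
    (hl : ∀ a, f a + (f (a * V) + (f (a * V ^ 2) + (f (a * W) + (f (a * W ^ 2)
      + f (a * W ^ 4))))) = e)
    (hV' : ∀ a, f a + f (a * V) + f (a * V ^ 2) = e)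
    (hW' : ∀ a, f a + f (a * W) + f (a * W ^ 5) = e) : e = 0 := by
  have h0 : ∀ a, f (a * W) + f (a * W ^ 2) + f (a * W ^ 4) = 0 := by
    intro a
    have h1 := hl a
    have h2 := hV' a
    rw [← h2] at h1
    have := sub_eq_zero.2 h1
    rw [← this]; abel
  have hs : ∀ c, ∑ a, f (a * c) = e := by
    intro c
    rw [← hsum]
    exact Fintype.sum_equiv (Equiv.mulRight c) _ _ (fun _ => rfl)
  have h3 : e + e + e = 0 := by
    have : ∑ a, (f (a * W) + f (a * W ^ 2) + f (a * W ^ 4)) = 0 :=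
      Finset.sum_eq_zero (fun a _ => h0 a)
    rw [Finset.sum_add_distrib, Finset.sum_add_distrib, hs, hs, hs] at this
    exact this
  have r : ∀ n, W ^ (n + 7) = W ^ n := by intro n; rw [pow_add, hW, mul_one]
  have A0 := h0 (W ^ 0)
  have A1 := h0 (W ^ 1)
  have A2 := h0 (W ^ 2)
  have A3 := h0 (W ^ 3)
  have A4 := h0 (W ^ 4)
  have A5 := h0 (W ^ 5)
  have A6 := h0 (W ^ 6)
  have B0 := hW' (W ^ 0)
  have B1 := hW' (W ^ 1)
  have B2 := hW' (W ^ 2)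
  have B3 := hW' (W ^ 3)
  have B4 := hW' (W ^ 4)
  have B5 := hW' (W ^ 5)
  have B6 := hW' (W ^ 6)
  simp only [← pow_succ, ← pow_add, Nat.reduceAdd]
    at A0 A1 A2 A3 A4 A5 A6 B0 B1 B2 B3 B4 B5 B6
  have r0 : W ^ 7 = W ^ 0 := r 0
  have r1 : W ^ 8 = W ^ 1 := r 1
  have r2 : W ^ 9 = W ^ 2 := r 2
  have r3 : W ^ 10 = W ^ 3 := r 3
  have r4 : W ^ 11 = W ^ 4 := r 4
  simp only [r0, r1, r2, r3, r4] at A0 A1 A2 A3 A4 A5 A6 B0 B1 B2 B3 B4 B5 B6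
  linear_combination (norm := abel) (A0 + A1 + A2 + A3 + A4 + A5 + A6)
    - (B0 + B1 + B2 + B3 + B4 + B5 + B6) - h3 - h3

lemma aux_distinct {P : Type*} [CommGroup P] (V W : P) (hV : V ^ 3 = 1) (hW : W ^ 7 = 1)
    (hV1 : V ≠ 1) (hW1 : W ≠ 1) :
    V ≠ V ^ 2 ∧ V ≠ W ∧ V ≠ W ^ 2 ∧ V ≠ W ^ 4 ∧ V ^ 2 ≠ W ∧ V ^ 2 ≠ W ^ 2 ∧ V ^ 2 ≠ W ^ 4 ∧
    W ≠ W ^ 2 ∧ W ≠ W ^ 4 ∧ W ^ 2 ≠ W ^ 4 := by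
  have hVo : orderOf V = 3 := orderOf_eq_prime hV hV1
  have hWo : orderOf W = 7 := by
    have : Fact (Nat.Prime 7) := ⟨by norm_num⟩
    exact orderOf_eq_prime hW hW1
  have c1 : ∀ i j, V ^ i = W ^ j → V ^ (i * 7) = 1 := by
    intro i j h
    rw [pow_mul, h, ← pow_mul, mul_comm, pow_mul, hW, one_pow]
  have c2 : ∀ i j, V ^ i = W ^ j → 3 ∣ i := by
    intro i j h
    have := orderOf_dvd_of_pow_eq_one (c1 i j h)
    rw [hVo] at this
    omega
  have c3 : ∀ i j, W ^ i = W ^ j → i % 7 = j % 7 := by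
    intro i j h
    have := pow_eq_pow_iff_modEq.1 h
    rwa [hWo] at this
  have c4 : ∀ i j, V ^ i = V ^ j → i % 3 = j % 3 := by
    intro i j h
    have := pow_eq_pow_iff_modEq.1 h
    rwa [hVo] at this
  refine ⟨fun h => ?_, fun h => ?_, fun h => ?_, fun h => ?_, fun h => ?_, fun h => ?_,
    fun h => ?_, fun h => ?_, fun h => ?_, fun h => ?_⟩
  · have := c4 1 2 (by simpa using h); omega
  · have := c2 1 1 (by simpa using h); omega
  · have := c2 1 2 (by simpa using h); omega
  · have := c2 1 4 (by simpa using h); omega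
  · have := c2 2 1 (by simpa using h); omega
  · have := c2 2 2 (by simpa using h); omega
  · have := c2 2 4 (by simpa using h); omega
  · have := c3 1 2 (by simpa using h); omega
  · have := c3 1 4 (by simpa using h); omega
  · have := c3 2 4 (by simpa using h); omega

lemma aux_exists {F : Type*} [Field F] [Fintype F] (hF : Fintype.card F = 64)
    (h2 : (2 : F) = 0) : ∃ v w : Fˣ,
      ((v : F) ^ 3) ^ 2 + (v : F) ^ 3 + 1 = 0 ∧ (w : F) ^ 3 + (w : F) ^ 2 + 1 = 0 := by
  classical
  obtain ⟨g, hg⟩ := IsCyclic.exists_ofOrder_eq_natCard (α := Fˣ)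
  have hc : Nat.card Fˣ = 63 := by
    rw [Nat.card_eq_fintype_card, Fintype.card_units, hF]
  rw [hc] at hg
  have hg63 : (g : F) ^ 63 = 1 := by
    have := pow_orderOf_eq_one g
    rw [hg] at this
    have h := congrArg Units.val this
    simpa using h
  have hn : ∀ n, 0 < n → n < 63 → (g : F) ^ n ≠ 1 := by
    intro n hn0 hn h
    have h' : g ^ n = 1 := by ext; simpa using h
    have := orderOf_dvd_of_pow_eq_one h'
    rw [hg] at this
    exact absurd (Nat.le_of_dvd hn0 this) (by omega)
  have hv : (((g ^ 7 : Fˣ) : F) ^ 3) ^ 2 + ((g ^ 7 : Fˣ) : F) ^ 3 + 1 = 0 := by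
    push_cast
    have h1 : ((g : F) ^ 21 - 1) * ((((g : F) ^ 7) ^ 3) ^ 2 + ((g : F) ^ 7) ^ 3 + 1) = 0 := by
      linear_combination hg63
    exact (mul_eq_zero.1 h1).resolve_left (sub_ne_zero.2 (hn 21 (by norm_num) (by norm_num)))
  have h9 : ((g : F) ^ 9 - 1) ≠ 0 := sub_ne_zero.2 (hn 9 (by norm_num) (by norm_num))
  obtain ⟨t, ht⟩ : ∃ t : Fˣ, t = g ^ 9 := ⟨_, rfl⟩
  have ht' : (t : F) = (g : F) ^ 9 := by rw [ht]; push_cast; rfl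
  have h7 : (t : F) ^ 7 = 1 := by rw [ht', ← pow_mul]; exact hg63
  rw [← ht'] at h9
  have hp : ((t : F) - 1) * (((t : F) ^ 3 + (t : F) ^ 2 + 1) * ((t : F) ^ 3 + t + 1)) = 0 := by
    linear_combination h7 + ((t : F) ^ 4 - (t : F) ^ 3) * h2
  have hp := (mul_eq_zero.1 hp).resolve_left h9
  rcases mul_eq_zero.1 hp with h | h
  · exact ⟨g ^ 7, t, hv, h⟩
  · refine ⟨g ^ 7, t⁻¹, hv, ?_⟩
    have t0 : (t : F) ≠ 0 := t.ne_zero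
    push_cast
    field_simp
    linear_combination h

set_option maxHeartbeats 1000000 in
theorem stmt19 (K F : Type*) [Field K] [Field F] [Algebra K F] [Fintype K] [Fintype F]
    (hK : Fintype.card K = 4) (hd : Module.finrank K F = 3) :
    titsEps 4 K F = 0 := by
  classical
  let _ : Fintype (ProjPts K F) := Fintype.ofFinite _
  have hF : Fintype.card F = 64 := by
    have : Module.Finite K F := Module.finite_of_finrank_pos (by omega)
    rw [Module.card_eq_pow_finrank (K := K), hK, hd]; norm_num
  have h2 : (2 : F) = 0 := by
    have h : ((Fintype.card F : ℕ) : F) = 0 := Nat.cast_card_eq_zero F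
    rw [hF] at h
    have : (2 : F) ^ 6 = 0 := by norm_num at h ⊢; exact h
    exact pow_eq_zero_iff (by norm_num) |>.1 this
  obtain ⟨v, w, hv, hw⟩ := aux_exists hF h2
  have w0 : (w : F) ≠ 0 := w.ne_zero
  have v0 : (v : F) ≠ 0 := v.ne_zero
  have hw7 : (w : F) ^ 7 = 1 := by
    linear_combination ((w : F) - 1) * ((w : F) ^ 3 + w + 1) * hw
      - ((w : F) ^ 4 - (w : F) ^ 3) * h2
  have hv9 : (v : F) ^ 9 = 1 := by linear_combination ((v : F) ^ 3 - 1) * hv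
  have htr : ∀ x : Fˣ, Algebra.trace K F (x : F) = 0 ↔
      ((x : F) ^ 3) ^ 5 + (x : F) ^ 3 + 1 = 0 := by
    intro x
    have h := FiniteField.algebraMap_trace_eq_sum_pow K F (x : F)
    rw [hd, Nat.card_eq_fintype_card, hK] at h
    rw [← (algebraMap K F).injective.eq_iff, map_zero, h]
    simp only [Finset.sum_range_succ, Finset.sum_range_zero]
    have e : (0 : F) + (x : F) ^ 4 ^ 0 + (x : F) ^ 4 ^ 1 + (x : F) ^ 4 ^ 2
      = x * (((x : F) ^ 3) ^ 5 + (x : F) ^ 3 + 1) := by ring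
    rw [e, mul_eq_zero]
    simp
  have htr' : ∀ x : Fˣ, Algebra.trace K F (x : F) = 0 ↔
      ((((x : F) ^ 3) ^ 2 + (x : F) ^ 3 + 1 = 0) ∨
       (((x : F) ^ 3) ^ 3 + ((x : F) ^ 3) ^ 2 + 1 = 0)) := by
    intro x
    rw [htr, ← mul_eq_zero]
    have e : (((x : F) ^ 3) ^ 2 + (x : F) ^ 3 + 1) * (((x : F) ^ 3) ^ 3 + ((x : F) ^ 3) ^ 2 + 1)
      = ((x : F) ^ 3) ^ 5 + (x : F) ^ 3 + 1 := by
      linear_combination (((x : F) ^ 3) ^ 4 + ((x : F) ^ 3) ^ 3 + ((x : F) ^ 3) ^ 2) * h2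
    rw [e]
  obtain ⟨s, hs⟩ : ∃ s : Fˣ, s = w ^ 5 := ⟨_, rfl⟩
  have hs3 : (s : F) ^ 3 = w := by
    rw [hs]; push_cast
    linear_combination ((w : F) ^ 8 + w) * hw7
  set V : ProjPts K F := pbar v with hVdef
  set W : ProjPts K F := pbar s with hWdef
  have pmul : ∀ x y : Fˣ, pbar (K := K) (x * y) = pbar x * pbar y := fun _ _ => rfl
  have ppow : ∀ (x : Fˣ) (n : ℕ), pbar (K := K) (x ^ n) = pbar x ^ n := fun _ _ => rfl
  have pone : pbar (K := K) (1 : Fˣ) = 1 := rfl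
  have hV3 : V ^ 3 = 1 := by
    rw [hVdef, ← ppow, ← pone]
    apply aux_cube hK h2
    push_cast
    linear_combination hv9
  have hW7 : W ^ 7 = 1 := by
    rw [hWdef, ← ppow, ← pone]
    apply aux_cube hK h2
    push_cast
    rw [← pow_mul, mul_comm, pow_mul, hs3, hw7, one_pow]
  have three : (3 : F) ≠ 0 := by
    intro h
    apply one_ne_zero (α := F)
    linear_combination h - h2
  have hV1 : V ≠ 1 := by
    intro h
    have := aux_cube' hK v 1 (by rw [pone]; exact h)
    have h' : (v : F) ^ 3 = 1 := by
      have := congrArg Units.val this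
      simpa using this
    rw [h'] at hv
    apply three
    linear_combination hv
  have hW1 : W ≠ 1 := by
    intro h
    have := aux_cube' hK s 1 (by rw [pone]; exact h)
    have h' : (s : F) ^ 3 = 1 := by
      have := congrArg Units.val this
      simpa using this
    rw [hs3] at h'
    rw [h'] at hw
    apply three
    linear_combination hw
  -- trace zero classes
  have tz : ∀ z : Fˣ, Algebra.trace K F (z : F) = 0 →
      pbar z = V ∨ pbar z = V ^ 2 ∨ pbar z = W ∨ pbar z = W ^ 2 ∨ pbar z = W ^ 4 := by
    intro z hz
    rw [hVdef, hWdef, ← ppow, ← ppow, ← ppow]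
    rcases (htr' z).1 hz with h | h
    · have : ((z : F) ^ 3 - (v : F) ^ 3) * ((z : F) ^ 3 - ((v : F) ^ 3) ^ 2) = 0 := by
        linear_combination h - (z : F) ^ 3 * hv + ((v : F) ^ 3 - 1) * hv
      rcases mul_eq_zero.1 this with h | h
      · left
        exact aux_cube hK h2 _ _ (sub_eq_zero.1 h)
      · right; left
        apply aux_cube hK h2
        push_cast
        linear_combination h
    · obtain ⟨u, hu⟩ : ∃ u, u = (z : F) ^ 3 := ⟨_, rfl⟩
      rw [← hu] at h
      have : (u - w) * ((u - (w : F) ^ 2) * (u - (w : F) ^ 4)) = 0 := by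
        have e4 : (w : F) ^ 4 = w ^ 2 + w + 1 := by
          linear_combination ((w : F) - 1) * hw - (w : F) * h2
        have e1 : (w : F) + w ^ 2 + w ^ 4 = 1 := by
          linear_combination e4 + ((w : F) ^ 2 + w) * h2
        have e2 : (w : F) ^ 3 + w ^ 5 + w ^ 6 = 0 := by
          linear_combination (w : F) ^ 3 * hw
        linear_combination h - u ^ 2 * e1 + u * e2 - hw7 - (u ^ 2 + 1) * h2
      rcases mul_eq_zero.1 this with h | h
      · right; right; left
        apply aux_cube hK h2
        rw [hs3, ← hu]; exact sub_eq_zero.1 h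
      rcases mul_eq_zero.1 h with h | h
      · right; right; right; left
        apply aux_cube hK h2
        rw [← hu, sub_eq_zero.1 h, ← hs3]; push_cast; ring
      · right; right; right; right
        apply aux_cube hK h2
        rw [← hu, sub_eq_zero.1 h, ← hs3]; push_cast; ring
  have tV : Algebra.trace K F (v : F) = 0 := (htr' v).2 (Or.inl hv)
  have tV2 : Algebra.trace K F ((v ^ 2 : Fˣ) : F) = 0 := by
    refine (htr' _).2 (Or.inl ?_)
    push_cast
    linear_combination hv + (v : F) ^ 3 * hv9
  have tW : Algebra.trace K F (s : F) = 0 := by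
    refine (htr' _).2 (Or.inr ?_)
    rw [hs3]; exact hw
  have tW2 : Algebra.trace K F ((s ^ 2 : Fˣ) : F) = 0 := by
    refine (htr' _).2 (Or.inr ?_)
    have : ((s ^ 2 : Fˣ) : F) ^ 3 = (w : F) ^ 2 := by rw [← hs3]; push_cast; ring
    rw [this]
    linear_combination ((w : F) ^ 3 + w ^ 2 + 1) * hw - ((w : F) ^ 5 + w ^ 3 + w ^ 2) * h2
  have tW4 : Algebra.trace K F ((s ^ 4 : Fˣ) : F) = 0 := by
    refine (htr' _).2 (Or.inr ?_)
    have : ((s ^ 4 : Fˣ) : F) ^ 3 = (w : F) ^ 4 := by rw [← hs3]; push_cast; ring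
    rw [this]
    linear_combination ((w : F) ^ 3 + w ^ 2 + 1) ^ 3 * hw
      - 2 * ((w : F) ^ 5 + w ^ 3 + w ^ 2) * ((w : F) ^ 3 + w ^ 2 + 1) ^ 2 * h2
      + 2 * ((w : F) ^ 5 + w ^ 3 + w ^ 2) ^ 2 * h2
      - ((w : F) ^ 10 + w ^ 6 + w ^ 4) * h2 
  have hinc : ∀ a b : ProjPts K F, titsInc a b ↔
      b ∈ ({a * V, a * V ^ 2, a * W, a * W ^ 2, a * W ^ 4} : Finset (ProjPts K F)) := by
    intro a b
    simp only [Finset.mem_insert, Finset.mem_singleton]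
    constructor
    · rintro ⟨x, y, rfl, rfl, h⟩
      have e : pbar (K := K) y = pbar x * pbar (y / x) := by rw [← pmul, mul_div_cancel]
      rw [e]
      simpa only [mul_right_inj] using tz _ h
    · obtain ⟨x, rfl⟩ : ∃ x : Fˣ, pbar x = a := QuotientGroup.mk_surjective a
      have c : ∀ d : Fˣ, Algebra.trace K F (d : F) = 0 → b = pbar x * pbar d →
          titsInc (pbar x) b := by
        intro d hd hb
        refine ⟨x, x * d, rfl, by rw [hb, pmul], ?_⟩
        rwa [mul_div_cancel_left]
      rintro (h | h | h | h | h)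
      · exact c v tV h
      · exact c (v ^ 2) tV2 h
      · exact c s tW h
      · exact c (s ^ 2) tW2 h
      · exact c (s ^ 4) tW4 h
  -- the group
  let f : ProjPts K F → TitsGroup 4 K F := fun b =>
    QuotientAddGroup.mk' (AddSubgroup.closure (titsRels 4 K F)) (FreeAbelianGroup.of (some b))
  have heps : titsEps 4 K F = QuotientAddGroup.mk' (AddSubgroup.closure (titsRels 4 K F))
    (FreeAbelianGroup.of none) := rfl
  have hrel : ∀ r ∈ titsRels 4 K F,
      QuotientAddGroup.mk' (AddSubgroup.closure (titsRels 4 K F)) r = 0 := by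
    intro r hr
    exact (QuotientAddGroup.eq_zero_iff r).2 (AddSubgroup.subset_closure hr)
  have hsum : ∑ b, f b = titsEps 4 K F := by
    have := hrel _ (Or.inr rfl)
    rw [map_sub, map_sum, sub_eq_zero] at this
    exact this
  have hline : ∀ a, ∑ b ∈ Finset.univ.filter (fun b : ProjPts K F => ¬ titsInc a b), f b
      = f a := by
    intro a
    have := hrel _ (Or.inl (Or.inl ⟨a, rfl⟩))
    rw [map_sub, map_sum, sub_eq_zero] at this
    convert this
  have htri : ∀ (a : ProjPts K F) (d : Fˣ), Algebra.trace K F (d : F) = 0 →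
      f a + f (a * pbar d) + f (a * pbar d ^ 5) = titsEps 4 K F := by
    intro a d hd
    obtain ⟨x, rfl⟩ : ∃ x : Fˣ, pbar x = a := QuotientGroup.mk_surjective a
    have := hrel _ (Or.inl (Or.inr ⟨_, ⟨x, d, hd, rfl⟩, rfl⟩))
    rw [map_sub, map_add, map_add, sub_eq_zero] at this
    exact this
  obtain ⟨d1, d2, d3, d4, d5, d6, d7, d8, d9, d10⟩ := aux_distinct V W hV3 hW7 hV1 hW1
  refine aux_final f _ V W hW7 hsum ?_ ?_ ?_
  · intro a
    have h1 := Finset.sum_filter_add_sum_filter_not Finset.univ (fun b => titsInc a b) f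
    rw [hline a, hsum] at h1
    have h3 : Finset.univ.filter (fun b => titsInc a b) =
        ({a * V, a * V ^ 2, a * W, a * W ^ 2, a * W ^ 4} : Finset (ProjPts K F)) := by
      ext b
      rw [Finset.mem_filter, hinc]
      simp
    rw [h3, Finset.sum_insert, Finset.sum_insert, Finset.sum_insert, Finset.sum_insert,
      Finset.sum_singleton] at h1
    · rw [← h1, add_comm]
    all_goals
      simp only [Finset.mem_insert, Finset.mem_singleton, mul_right_inj, d1, d2, d3, d4, d5, d6, d7, d8, d9,
        d10, or_self, not_false_eq_true]
  · intro a
    have h := htri a v tV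
    have e : V ^ 5 = V ^ 2 := by
      rw [show (5 : ℕ) = 3 + 2 from rfl, pow_add, hV3, one_mul]
    rw [← hVdef, e] at h
    exact h
  · intro a
    exact htri a s tW
end
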